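/- Let K = GF(q) be a finite field with q elements and let R be an h-dimensional Laguerre algebra over K (a finite-dimensional local K-algebra with (R,+) = K ⊕ rad R, dim_K R = h, 1 ≤ h < ∞). Then the projective line P(R) together with the set of K-chains and the parallel classes is a transversal 3-(s,k,1) divisible design with v = q^h + q^{h−1} points, s = q^{h−1}, and k = q + 1; in particular: card P(R) = q^h + q^{h−1}, every parallel class has q^{h−1} points, every K-chain has q + 1 points and meets every parallel class in exactly one point, and any three mutually distant points of P(R) are contained in exactly one K-chain. -/

import Mathlib

/-!
A Laguerre algebra has a residue map `π : R → K`, a ring homomorphism which is a retraction of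
`K → R` and whose kernel is the ideal of non-units (`exists_residue`). By block elimination a
`2 × 2` matrix over `R` is invertible iff its image under `π` is (`isUnit_matrix_iff`). Hence
`(a, b)` is admissible iff `(π a, π b) ≠ 0`, and `R(a,b)`, `R(c,d)` are distant iff
`π a π d ≠ π b π c` (`distant_iff`): the parallel classes are the fibres of the map
`P(R) → P(K)` induced by `π`.

The points are `R(1,b)` with `b ∈ R` and `R(j,1)` with `j ∈ ker π`, which gives the point count
because `|ker π| = q^(h-1)`. As `GL₂(R)` acts transitively and preserves distance, it is enough to
look at the parallel class of `R(1,0)`, which is `{R(1,j) : π j = 0}`. The standard chain is the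
image of a section of `P(R) → P(K)`, so it meets each parallel class once.

For three mutually distant points, `GL₂(R)` is transitive on such triples
(`exists_frame`), which gives existence. If `C₀γ` and `C₀γ'` contain the same three points, then,
using the same transitivity over `K`, one finds `δ ∈ GL₂(K)` such that `δγ'γ⁻¹` fixes `R(1,0)`,
`R(0,1)` and `R(1,1)`. Such a matrix is scalar, and scalar matrices fix `C₀` pointwise because `K`
is central; as `C₀δ = C₀`, the two chains agree.
-/

/-- A pair `(a,b) ∈ R²` is admissible if it is the first row of an invertible 2×2 matrix. -/
def Admissible (R : Type*) [Ring R] (a b : R) : Prop :=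
  ∃ γ : (Matrix (Fin 2) (Fin 2) R)ˣ, γ.val 0 0 = a ∧ γ.val 0 1 = b

/-- The projective line over `R`: cyclic left submodules `R(a,b)` with `(a,b)` admissible. -/
def ProjPoint (R : Type*) [Ring R] : Set (Submodule R (R × R)) :=
  {p | ∃ a b : R, Admissible R a b ∧ p = Submodule.span R {(a, b)}}

/-- Two points are distant if some admissible representatives of them are the two rows of an
invertible 2×2 matrix. -/
def Distant (R : Type*) [Ring R] (p q : Submodule R (R × R)) : Prop :=
  ∃ γ : (Matrix (Fin 2) (Fin 2) R)ˣ,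
    p = Submodule.span R {(γ.val 0 0, γ.val 0 1)} ∧
    q = Submodule.span R {(γ.val 1 0, γ.val 1 1)}

/-- Right multiplication of a row vector by a matrix, as a left `R`-linear map. -/
def rowMul (R : Type*) [Ring R] (γ : Matrix (Fin 2) (Fin 2) R) : (R × R) →ₗ[R] (R × R) where
  toFun v := (v.1 * γ 0 0 + v.2 * γ 1 0, v.1 * γ 0 1 + v.2 * γ 1 1)
  map_add' x y := by
    simp only [Prod.fst_add, Prod.snd_add, add_mul, Prod.mk_add_mk, Prod.mk.injEq]
    constructor <;> abel
  map_smul' c v := by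
    simp only [Prod.smul_fst, Prod.smul_snd, smul_eq_mul, RingHom.id_apply, Prod.smul_mk,
      mul_add, mul_assoc]

/-- The action of `GL₂(R)` on the projective line: `R(a,b)·γ = R((a,b)·γ)`. -/
def ptAct (R : Type*) [Ring R] (γ : (Matrix (Fin 2) (Fin 2) R)ˣ)
    (p : Submodule R (R × R)) : Submodule R (R × R) :=
  p.map (rowMul R γ.val)

/-- The standard chain: image of `P(K)` in `P(R)` under the embedding induced by `f`. -/
def StdChain (K R : Type*) [DivisionRing K] [Ring R] (f : K →+* R) :
    Set (Submodule R (R × R)) :=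
  {p | ∃ a b : K, Admissible K a b ∧ p = Submodule.span R {(f a, f b)}}

/-- A `K`-chain: an image of the standard chain under an element of `GL₂(R)`. -/
def IsKChain (K R : Type*) [DivisionRing K] [Ring R] (f : K →+* R)
    (C : Set (Submodule R (R × R))) : Prop :=
  ∃ γ : (Matrix (Fin 2) (Fin 2) R)ˣ, C = (ptAct R γ) '' StdChain K R f

/-- `R` is a local ring: the non-units form a (two-sided) ideal. -/
def NonunitsIdeal (R : Type*) [Ring R] : Prop :=
  (∀ a b : R, ¬IsUnit a → ¬IsUnit b → ¬IsUnit (a + b)) ∧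
  (∀ a x : R, ¬IsUnit a → ¬IsUnit (x * a) ∧ ¬IsUnit (a * x))

/-! ### The action of `GL₂(R)` on the projective line -/

section Action

variable {R : Type*} [Ring R]

lemma ptAct_span (γ : (Matrix (Fin 2) (Fin 2) R)ˣ) (a b : R) :
    ptAct R γ (Submodule.span R {(a, b)}) =
      Submodule.span R {(a * γ.val 0 0 + b * γ.val 1 0, a * γ.val 0 1 + b * γ.val 1 1)} := by
  simp [ptAct, Submodule.map_span, rowMul]

lemma ptAct_mul (γ δ : (Matrix (Fin 2) (Fin 2) R)ˣ) (p : Submodule R (R × R)) :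
    ptAct R (γ * δ) p = ptAct R δ (ptAct R γ p) := by
  unfold ptAct
  rw [← Submodule.map_comp]
  congr 1
  ext <;> simp [rowMul, Matrix.mul_apply, Fin.sum_univ_two]

lemma ptAct_one (p : Submodule R (R × R)) : ptAct R 1 p = p := by
  have : rowMul R (1 : (Matrix (Fin 2) (Fin 2) R)ˣ).val = LinearMap.id := by
    ext <;> simp [rowMul]
  rw [ptAct, this, Submodule.map_id]

lemma ptAct_inv_ptAct (γ : (Matrix (Fin 2) (Fin 2) R)ˣ) (p : Submodule R (R × R)) :
    ptAct R γ⁻¹ (ptAct R γ p) = p := by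
  rw [← ptAct_mul, mul_inv_cancel, ptAct_one]

lemma ptAct_ptAct_inv (γ : (Matrix (Fin 2) (Fin 2) R)ˣ) (p : Submodule R (R × R)) :
    ptAct R γ (ptAct R γ⁻¹ p) = p := by
  rw [← ptAct_mul, inv_mul_cancel, ptAct_one]

lemma ptAct_injective (γ : (Matrix (Fin 2) (Fin 2) R)ˣ) : Function.Injective (ptAct R γ) :=
  Function.LeftInverse.injective (ptAct_inv_ptAct γ)

lemma Distant.ptAct {p q : Submodule R (R × R)} (h : Distant R p q)
    (γ : (Matrix (Fin 2) (Fin 2) R)ˣ) : Distant R (ptAct R γ p) (ptAct R γ q) := by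
  obtain ⟨δ, rfl, rfl⟩ := h
  refine ⟨δ * γ, ?_, ?_⟩ <;>
    simp [ptAct_span, Matrix.mul_apply, Fin.sum_univ_two]

lemma distant_ptAct_iff (γ : (Matrix (Fin 2) (Fin 2) R)ˣ) (p q : Submodule R (R × R)) :
    Distant R (ptAct R γ p) (ptAct R γ q) ↔ Distant R p q := by
  refine ⟨fun h => ?_, fun h => h.ptAct γ⟩
  simpa [ptAct_inv_ptAct] using h.ptAct γ⁻¹

/-- `GL₂(R)` is transitive on points: the projective line is the orbit of `R(1,0)`. -/
lemma mem_projPoint_iff (p : Submodule R (R × R)) :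
    p ∈ ProjPoint R ↔
      ∃ γ : (Matrix (Fin 2) (Fin 2) R)ˣ, p = ptAct R γ (Submodule.span R {(1, 0)}) := by
  constructor
  · rintro ⟨a, b, ⟨γ, rfl, rfl⟩, rfl⟩
    exact ⟨γ, by simp [ptAct_span]⟩
  · rintro ⟨γ, rfl⟩
    exact ⟨_, _, ⟨γ, rfl, rfl⟩, by simp [ptAct_span]⟩

lemma ptAct_mem_projPoint {p : Submodule R (R × R)} (hp : p ∈ ProjPoint R)
    (γ : (Matrix (Fin 2) (Fin 2) R)ˣ) : ptAct R γ p ∈ ProjPoint R := by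
  rw [mem_projPoint_iff] at *
  obtain ⟨δ, rfl⟩ := hp
  exact ⟨δ * γ, (ptAct_mul _ _ _).symm⟩

lemma span_unit_mul {x : R} (hx : IsUnit x) (a b : R) :
    Submodule.span R {(x * a, x * b)} = Submodule.span R {(a, b)} :=
  Submodule.span_singleton_smul_eq hx (a, b)

lemma exists_of_span_eq {a b c d : R}
    (h : Submodule.span R {(a, b)} = Submodule.span R {(c, d)}) :
    ∃ x, a = x * c ∧ b = x * d := by
  have : (a, b) ∈ Submodule.span R {(c, d)} := h ▸ Submodule.mem_span_singleton_self _
  obtain ⟨x, hx⟩ := Submodule.mem_span_singleton.1 this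
  simp only [Prod.smul_mk, smul_eq_mul, Prod.mk.injEq] at hx
  exact ⟨x, hx.1.symm, hx.2.symm⟩

end Action

/-! ### The residue map and invertible matrices -/

section Residue

variable {K R : Type*} [Field K] [Ring R]

/-- The residue map of a Laguerre algebra, sending `r` to the unique `k ∈ K` such that `r - k` is
a non-unit. -/
lemma exists_residue [Nontrivial R] [Algebra K R] (hlocal : NonunitsIdeal R)
    (h1 : ∀ r : R, ∃ k : K, ¬IsUnit (r - algebraMap K R k)) :
    ∃ π : R →+* K, (∀ k, π (algebraMap K R k) = k) ∧ ∀ r, IsUnit r ↔ π r ≠ 0 := by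
  obtain ⟨hadd, hmul⟩ := hlocal
  choose φ hφ using h1
  have huniq : ∀ r k, ¬IsUnit (r - algebraMap K R k) → φ r = k := by
    intro r k hk
    by_contra hne
    have hunit : IsUnit (algebraMap K R (φ r - k)) :=
      (IsUnit.mk0 _ (sub_ne_zero.2 hne)).map (algebraMap K R)
    refine hadd _ _ hk (fun h => hφ r (IsUnit.neg_iff _ |>.1 h)) ?_
    convert hunit using 1
    rw [map_sub]; abel
  have h0 : ¬IsUnit (0 : R) := not_isUnit_zero
  refine ⟨⟨⟨⟨φ, huniq _ _ (by simp)⟩, fun r s => huniq _ _ ?_⟩, huniq _ _ (by simp),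
    fun r s => huniq _ _ ?_⟩, fun k => huniq _ _ (by simp), fun r => ?_⟩
  · have h := hadd _ _ (hmul _ s (hφ r)).2 (hmul _ (algebraMap K R (φ r)) (hφ s)).1
    convert h using 2
    rw [map_mul]; noncomm_ring
  · have h := hadd _ _ (hφ r) (hφ s)
    convert h using 2
    rw [map_add]; abel
  · change IsUnit r ↔ φ r ≠ 0
    constructor
    · intro hr h
      exact hφ r (by simpa [h] using hr)
    · intro hr
      by_contra hnu
      exact hr (huniq r 0 (by simpa using hnu))

variable {π : R →+* K}

/-- Invertibility of a `2 × 2` matrix over `R` is decided by the determinant of its residue. -/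
lemma isUnit_matrix_iff (hu : ∀ r, IsUnit r ↔ π r ≠ 0) (a b c d : R) :
    IsUnit !![a, b; c, d] ↔ π a * π d ≠ π b * π c := by
  constructor
  · intro h
    have h := (Matrix.isUnit_iff_isUnit_det _).1 (h.map π.mapMatrix)
    rw [isUnit_iff_ne_zero, Matrix.det_fin_two] at h
    simpa [sub_ne_zero] using h
  -- elimination for a matrix whose upper left entry is a unit
  · have key : ∀ a b c d : R, π a ≠ 0 → π a * π d ≠ π b * π c → IsUnit !![a, b; c, d] := by
      intro a b c d ha hdet
      obtain ⟨u, rfl⟩ := (hu a).2 ha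
      have hinv : π (↑u⁻¹ : R) = (π u)⁻¹ :=
        eq_inv_of_mul_eq_one_left (by rw [← map_mul]; simp)
      obtain ⟨s, hs⟩ := (hu (d - c * ↑u⁻¹ * b)).2 (by
        rw [map_sub, map_mul, map_mul, hinv, sub_ne_zero]
        intro h
        apply hdet
        rw [h]; field_simp)
      have hL : IsUnit !![(1 : R), 0; c * ↑u⁻¹, 1] :=
        ⟨⟨_, !![1, 0; -(c * ↑u⁻¹), 1], by simp [Matrix.one_fin_two],
          by simp [Matrix.one_fin_two]⟩, rfl⟩
      have hU : IsUnit !![(1 : R), ↑u⁻¹ * b; 0, 1] :=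
        ⟨⟨_, !![1, -(↑u⁻¹ * b); 0, 1], by simp [Matrix.one_fin_two],
          by simp [Matrix.one_fin_two]⟩, rfl⟩
      have hD : IsUnit !![(u : R), 0; 0, s] :=
        ⟨⟨_, !![↑u⁻¹, 0; 0, ↑s⁻¹], by simp [Matrix.one_fin_two],
          by simp [Matrix.one_fin_two]⟩, rfl⟩
      have := (hL.mul hD).mul hU
      convert this using 1
      simp [hs, mul_assoc]
    intro hdet
    by_cases ha : π a = 0
    -- here `b` is a unit, and the columns can be swapped
    · have hb : π b ≠ 0 := by
        rintro hb
        simp [ha, hb] at hdet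
      have hS : IsUnit !![(0 : R), 1; 1, 0] :=
        ⟨⟨_, !![0, 1; 1, 0], by simp [Matrix.one_fin_two],
          by simp [Matrix.one_fin_two]⟩, rfl⟩
      have := (key b a d c hb hdet.symm).mul hS
      simpa [Matrix.mul_fin_two] using this
    · exact key a b c d ha hdet

lemma exists_gl_of_det_ne (hu : ∀ r, IsUnit r ↔ π r ≠ 0) {a b c d : R}
    (h : π a * π d ≠ π b * π c) :
    ∃ γ : (Matrix (Fin 2) (Fin 2) R)ˣ,
      γ.val 0 0 = a ∧ γ.val 0 1 = b ∧ γ.val 1 0 = c ∧ γ.val 1 1 = d := by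
  obtain ⟨γ, hγ⟩ := (isUnit_matrix_iff hu a b c d).2 h
  exact ⟨γ, by simp [hγ]⟩

lemma det_ne (hu : ∀ r, IsUnit r ↔ π r ≠ 0) (γ : (Matrix (Fin 2) (Fin 2) R)ˣ) :
    π (γ.val 0 0) * π (γ.val 1 1) ≠ π (γ.val 0 1) * π (γ.val 1 0) := by
  rw [← isUnit_matrix_iff hu, ← Matrix.eta_fin_two]
  exact γ.isUnit

/-! ### Points, distance and parallel classes -/

lemma admissible_iff (hu : ∀ r, IsUnit r ↔ π r ≠ 0) (a b : R) :
    Admissible R a b ↔ π a ≠ 0 ∨ π b ≠ 0 := by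
  constructor
  · rintro ⟨γ, rfl, rfl⟩
    have := det_ne hu γ
    contrapose! this
    simp [this]
  · rintro (h | h)
    · obtain ⟨γ, h1, h2, -⟩ := exists_gl_of_det_ne (a := a) (b := b) (c := 0) (d := 1) hu
        (by simpa using h)
      exact ⟨γ, h1, h2⟩
    · obtain ⟨γ, h1, h2, -⟩ := exists_gl_of_det_ne (a := a) (b := b) (c := 1) (d := 0) hu
        (by simpa using h.symm)
      exact ⟨γ, h1, h2⟩

/-- Admissibility over the field itself, where the residue map is the identity. -/
lemma admissible_field_iff (a b : K) : Admissible K a b ↔ a ≠ 0 ∨ b ≠ 0 :=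
  admissible_iff (π := RingHom.id K) (fun _ => isUnit_iff_ne_zero) a b

lemma distant_iff (hu : ∀ r, IsUnit r ↔ π r ≠ 0) (a b c d : R) :
    Distant R (Submodule.span R {(a, b)}) (Submodule.span R {(c, d)}) ↔
      π a * π d ≠ π b * π c := by
  constructor
  · rintro ⟨γ, h1, h2⟩
    obtain ⟨x, hx1, hx2⟩ := exists_of_span_eq h1.symm
    obtain ⟨y, hy1, hy2⟩ := exists_of_span_eq h2.symm
    have := det_ne hu γ
    rw [hx1, hx2, hy1, hy2] at this
    simp only [map_mul] at this
    contrapose! this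
    linear_combination (π x * π y) * this
  · intro h
    obtain ⟨γ, rfl, rfl, rfl, rfl⟩ := exists_gl_of_det_ne hu h
    exact ⟨γ, rfl, rfl⟩

/-- Normal form of points. -/
lemma projPoint_cases (hu : ∀ r, IsUnit r ↔ π r ≠ 0) {p : Submodule R (R × R)}
    (hp : p ∈ ProjPoint R) :
    (∃ b, p = Submodule.span R {(1, b)}) ∨ ∃ a, π a = 0 ∧ p = Submodule.span R {(a, 1)} := by
  obtain ⟨a, b, hab, rfl⟩ := hp
  rw [admissible_iff hu] at hab
  by_cases ha : π a = 0
  · obtain ⟨u, rfl⟩ := (hu b).2 (by simpa [ha] using hab)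
    refine .inr ⟨↑u⁻¹ * a, by simp [ha], ?_⟩
    rw [← span_unit_mul u.isUnit (↑u⁻¹ * a)]
    simp
  · obtain ⟨u, rfl⟩ := (hu a).2 ha
    refine .inl ⟨↑u⁻¹ * b, ?_⟩
    rw [← span_unit_mul u.isUnit 1]
    simp

lemma span_one_left_mem (b : R) : Submodule.span R {((1 : R), b)} ∈ ProjPoint R :=
  ⟨1, b, ⟨⟨!![1, b; 0, 1], !![1, -b; 0, 1], by simp [Matrix.one_fin_two],
    by simp [Matrix.one_fin_two]⟩, rfl, rfl⟩, rfl⟩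

lemma span_one_left_inj {b b' : R}
    (h : Submodule.span R {((1 : R), b)} = Submodule.span R {((1 : R), b')}) : b = b' := by
  obtain ⟨x, hx, rfl⟩ := exists_of_span_eq h
  rw [mul_one] at hx
  rw [← hx, one_mul]

lemma span_one_right_inj {b b' : R}
    (h : Submodule.span R {(b, (1 : R))} = Submodule.span R {(b', (1 : R))}) : b = b' := by
  obtain ⟨x, rfl, hx⟩ := exists_of_span_eq h
  rw [mul_one] at hx
  rw [← hx, one_mul]

lemma card_projPoint [Finite R] (hu : ∀ r, IsUnit r ↔ π r ≠ 0) :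
    Nat.card (ProjPoint R) = Nat.card R + Nat.card {r : R // π r = 0} := by
  rw [← Nat.card_sum]
  symm
  refine Nat.card_eq_of_bijective
    (Sum.elim (fun b => ⟨Submodule.span R {(1, b)}, span_one_left_mem b⟩)
      (fun a => ⟨Submodule.span R {(a.1, 1)}, a.1, 1,
        (admissible_iff hu _ _).2 (.inr (by simp)), rfl⟩)) ⟨?_, ?_⟩
  · have hne : ∀ (b : R) (a : {r : R // π r = 0}),
        Submodule.span R {((1 : R), b)} ≠ Submodule.span R {(a.1, (1 : R))} := by
      intro b a h
      obtain ⟨x, hx, -⟩ := exists_of_span_eq h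
      simpa [a.2] using congrArg π hx
    rintro (b | a) (b' | a') h <;> replace h := congrArg Subtype.val h
    · rw [span_one_left_inj h]
    · exact (hne _ _ h).elim
    · exact (hne _ _ h.symm).elim
    · rw [Subtype.ext (span_one_right_inj h)]
  · rintro ⟨p, hp⟩
    obtain ⟨b, rfl⟩ | ⟨a, ha, rfl⟩ := projPoint_cases hu hp
    · exact ⟨.inl b, rfl⟩
    · exact ⟨.inr ⟨a, ha⟩, rfl⟩

lemma card_parallelClass (hu : ∀ r, IsUnit r ↔ π r ≠ 0) {p : Submodule R (R × R)}
    (hp : p ∈ ProjPoint R) :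
    Nat.card {x : Submodule R (R × R) // x ∈ ProjPoint R ∧ ¬Distant R p x} =
      Nat.card {r : R // π r = 0} := by
  obtain ⟨γ, rfl⟩ := (mem_projPoint_iff p).1 hp
  symm
  refine Nat.card_eq_of_bijective (fun j => ⟨ptAct R γ (Submodule.span R {(1, j.1)}),
    ptAct_mem_projPoint (span_one_left_mem _) γ, ?_⟩) ⟨?_, ?_⟩
  · rw [distant_ptAct_iff, distant_iff hu]
    simp [j.2]
  · intro j j' h
    exact Subtype.ext (span_one_left_inj (ptAct_injective γ (congrArg Subtype.val h)))
  · rintro ⟨x, hx, hd⟩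
    rw [← ptAct_ptAct_inv γ x, distant_ptAct_iff] at hd
    obtain ⟨b, hb⟩ | ⟨a, ha, hb⟩ := projPoint_cases hu (ptAct_mem_projPoint hx γ⁻¹)
    · rw [hb, distant_iff hu] at hd
      refine ⟨⟨b, by simpa using hd⟩, Subtype.ext ?_⟩
      change ptAct R γ _ = x
      rw [← hb, ptAct_ptAct_inv]
    · rw [hb, distant_iff hu] at hd
      simp at hd

/-! ### Triples of mutually distant points -/

/-- Transitivity of `GL₂(R)` on triples of mutually distant points, in terms of representatives:
two of them can be rescaled so that they add up to the third one. -/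
lemma exists_frame (hu : ∀ r, IsUnit r ↔ π r ≠ 0) {a b c d e g : R}
    (h1 : π a * π d ≠ π b * π c) (h2 : π a * π g ≠ π b * π e) (h3 : π c * π g ≠ π d * π e) :
    ∃ (γ : (Matrix (Fin 2) (Fin 2) R)ˣ) (x y : R), IsUnit x ∧ IsUnit y ∧
      γ.val 0 0 = x * a ∧ γ.val 0 1 = x * b ∧ γ.val 1 0 = y * c ∧ γ.val 1 1 = y * d ∧
      x * a + y * c = e ∧ x * b + y * d = g := by
  obtain ⟨M, rfl, rfl, rfl, rfl⟩ := exists_gl_of_det_ne hu h1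
  -- `(x, y)` are the coordinates of `(e, g)` with respect to the rows of `M`
  obtain ⟨x, hx⟩ : ∃ x, x = e * M⁻¹.val 0 0 + g * M⁻¹.val 1 0 := ⟨_, rfl⟩
  obtain ⟨y, hy⟩ : ∃ y, y = e * M⁻¹.val 0 1 + g * M⁻¹.val 1 1 := ⟨_, rfl⟩
  have hM : ∀ i j, M⁻¹.val i 0 * M.val 0 j + M⁻¹.val i 1 * M.val 1 j =
      (1 : Matrix (Fin 2) (Fin 2) R) i j := by
    intro i j
    rw [← M.inv_mul, Matrix.mul_apply, Fin.sum_univ_two]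
  have hcoord : ∀ j, x * M.val 0 j + y * M.val 1 j =
      e * (1 : Matrix (Fin 2) (Fin 2) R) 0 j + g * (1 : Matrix (Fin 2) (Fin 2) R) 1 j := by
    intro j
    rw [hx, hy, ← hM, ← hM]
    noncomm_ring
  have he : x * M.val 0 0 + y * M.val 1 0 = e := by simpa using hcoord 0
  have hg : x * M.val 0 1 + y * M.val 1 1 = g := by simpa using hcoord 1
  have hπx : π x ≠ 0 := by
    intro h
    apply h3
    rw [← he, ← hg]
    simp only [map_add, map_mul, h]
    ring
  have hπy : π y ≠ 0 := by
    intro h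
    apply h2
    rw [← he, ← hg]
    simp only [map_add, map_mul, h]
    ring
  obtain ⟨γ, hγ⟩ := exists_gl_of_det_ne (a := x * M.val 0 0) (b := x * M.val 0 1)
    (c := y * M.val 1 0) (d := y * M.val 1 1) hu (by
      simp only [map_mul]
      intro h
      apply h1
      apply mul_left_cancel₀ (mul_ne_zero hπx hπy)
      linear_combination h)
  exact ⟨γ, x, y, (hu x).2 hπx, (hu y).2 hπy, hγ.1, hγ.2.1, hγ.2.2.1, hγ.2.2.2, he, hg⟩

/-! ### Chains -/

variable {f : K →+* R}

lemma card_stdChain [Finite K] [Nontrivial R] :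
    Nat.card (StdChain K R f) = Nat.card K + 1 := by
  rw [← Finite.card_option]
  symm
  -- `some k` stands for the point `R(1,k)`, and `none` for `R(0,1)`
  refine Nat.card_eq_of_bijective (fun o => o.elim
    ⟨Submodule.span R {(f 0, f 1)}, 0, 1, (admissible_field_iff _ _).2 (by simp), rfl⟩
    (fun k => ⟨Submodule.span R {(f 1, f k)}, 1, k,
      (admissible_field_iff _ _).2 (by simp), rfl⟩)) ⟨?_, ?_⟩
  · have hne : ∀ k : K, Submodule.span R {(f 1, f k)} ≠ Submodule.span R {(f 0, f 1)} := by
      intro k h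
      obtain ⟨x, hx, -⟩ := exists_of_span_eq h
      simp at hx
    rintro (_ | k) (_ | k') h <;> replace h := congrArg Subtype.val h
    · rfl
    · exact (hne _ h.symm).elim
    · exact (hne _ h).elim
    · simp only [Option.elim, map_one] at h
      rw [f.injective (span_one_left_inj h)]
  · rintro ⟨_, a, b, hab, rfl⟩
    rw [admissible_field_iff] at hab
    by_cases ha : a = 0
    · refine ⟨none, Subtype.ext ?_⟩
      have hb : b ≠ 0 := by simpa [ha] using hab
      change Submodule.span R {(f 0, f 1)} = _
      rw [← span_unit_mul ((IsUnit.mk0 b hb).map f) (f 0)]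
      simp [ha]
    · refine ⟨some (a⁻¹ * b), Subtype.ext ?_⟩
      change Submodule.span R {(f 1, f (a⁻¹ * b))} = _
      rw [← span_unit_mul ((IsUnit.mk0 a ha).map f) (f 1), ← map_mul, ← map_mul,
        mul_inv_cancel_left₀ ha, mul_one]

/-- The standard chain meets every parallel class in exactly one point, namely the class of
`R(a,b)` in `R(π a, π b)`. -/
lemma stdChain_transversal (hf : ∀ k, π (f k) = k) (hu : ∀ r, IsUnit r ↔ π r ≠ 0)
    {p : Submodule R (R × R)} (hp : p ∈ ProjPoint R) :
    ∃! x, x ∈ StdChain K R f ∧ ¬Distant R x p := by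
  obtain ⟨a, b, hab, rfl⟩ := hp
  rw [admissible_iff hu] at hab
  refine ⟨Submodule.span R {(f (π a), f (π b))},
    ⟨⟨_, _, (admissible_field_iff _ _).2 hab, rfl⟩, ?_⟩, ?_⟩
  · rw [distant_iff hu, hf, hf]
    simp [mul_comm]
  · rintro _ ⟨⟨c, d, hcd, rfl⟩, hd⟩
    rw [distant_iff hu, hf, hf, not_not] at hd
    rw [admissible_field_iff] at hcd
    obtain ⟨l, hl, rfl, rfl⟩ : ∃ l : K, l ≠ 0 ∧ c = l * π a ∧ d = l * π b := by
      by_cases ha : π a = 0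
      · have hb : π b ≠ 0 := by simpa [ha] using hab
        have hc : c = 0 := by simpa [ha, hb] using hd
        have hd0 : d ≠ 0 := by simpa [hc] using hcd
        exact ⟨d / π b, div_ne_zero hd0 hb, by simp [hc, ha], by field_simp⟩
      · have hc : c ≠ 0 := by
          rintro rfl
          simp [ha] at hd
          simp [hd] at hcd
        refine ⟨c / π a, div_ne_zero hc ha, by field_simp, ?_⟩
        field_simp
        linear_combination -hd
    rw [map_mul, map_mul, span_unit_mul ((IsUnit.mk0 l hl).map f)]

/-- `GL₂(K)` acts on the standard chain. -/
lemma ptAct_map_mem_stdChain (δ : (Matrix (Fin 2) (Fin 2) K)ˣ) {x : Submodule R (R × R)}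
    (hx : x ∈ StdChain K R f) :
    ptAct R (Units.map f.mapMatrix.toMonoidHom δ) x ∈ StdChain K R f := by
  obtain ⟨a, b, ⟨ε, rfl, rfl⟩, rfl⟩ := hx
  refine ⟨_, _, ⟨ε * δ, rfl, rfl⟩, ?_⟩
  simp [ptAct_span, Matrix.mul_apply, Fin.sum_univ_two]

lemma ptAct_map_image_stdChain (δ : (Matrix (Fin 2) (Fin 2) K)ˣ) :
    ptAct R (Units.map f.mapMatrix.toMonoidHom δ) '' StdChain K R f = StdChain K R f := by
  apply Set.Subset.antisymm
  · rintro _ ⟨x, hx, rfl⟩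
    exact ptAct_map_mem_stdChain δ hx
  · intro x hx
    refine ⟨_, ptAct_map_mem_stdChain δ⁻¹ hx, ?_⟩
    rw [map_inv, ptAct_ptAct_inv]

/-- A matrix fixing `R(1,0)`, `R(0,1)` and `R(1,1)` is scalar, so it fixes the standard chain
pointwise, the elements of `K` being central in `R`. -/
lemma ptAct_eq_self_of_fix (hc : ∀ k r, f k * r = r * f k) (ε : (Matrix (Fin 2) (Fin 2) R)ˣ)
    (h0 : ptAct R ε (Submodule.span R {(1, 0)}) = Submodule.span R {(1, 0)})
    (h1 : ptAct R ε (Submodule.span R {(0, 1)}) = Submodule.span R {(0, 1)})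
    (h2 : ptAct R ε (Submodule.span R {(1, 1)}) = Submodule.span R {(1, 1)})
    {x : Submodule R (R × R)} (hx : x ∈ StdChain K R f) : ptAct R ε x = x := by
  rw [ptAct_span] at h0 h1 h2
  obtain ⟨_, -, h01⟩ := exists_of_span_eq h0
  obtain ⟨_, h10, -⟩ := exists_of_span_eq h1
  obtain ⟨z, hz0, hz1⟩ := exists_of_span_eq h2
  simp only [one_mul, zero_mul, mul_zero, mul_one, add_zero, zero_add] at h01 h10 hz0 hz1
  rw [h10, add_zero] at hz0
  rw [h01, zero_add] at hz1
  have hz : IsUnit z := by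
    have e1 := congrFun₂ ε.mul_inv 0 0
    have e2 := congrFun₂ ε.inv_mul 0 0
    simp only [Matrix.mul_apply, Fin.sum_univ_two, h01, h10, hz0, Matrix.one_apply_eq, zero_mul,
      mul_zero, add_zero] at e1 e2
    exact ⟨⟨z, _, e1, e2⟩, rfl⟩
  obtain ⟨a, b, -, rfl⟩ := hx
  rw [ptAct_span, h01, h10, hz0, hz1, mul_zero, mul_zero, add_zero, zero_add, hc, hc,
    span_unit_mul hz]

/-- Two chains through the images of `R(1,0)`, `R(0,1)`, `R(1,1)` under `γ` coincide. -/
lemma chain_unique (hf : ∀ k, π (f k) = k) (hu : ∀ r, IsUnit r ↔ π r ≠ 0)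
    (hc : ∀ k r, f k * r = r * f k) (γ γ' : (Matrix (Fin 2) (Fin 2) R)ˣ)
    (h0 : ptAct R γ (Submodule.span R {(1, 0)}) ∈ ptAct R γ' '' StdChain K R f)
    (h1 : ptAct R γ (Submodule.span R {(0, 1)}) ∈ ptAct R γ' '' StdChain K R f)
    (h2 : ptAct R γ (Submodule.span R {(1, 1)}) ∈ ptAct R γ' '' StdChain K R f) :
    ptAct R γ' '' StdChain K R f = ptAct R γ '' StdChain K R f := by
  obtain ⟨_, ⟨a, b, -, rfl⟩, h0⟩ := h0
  obtain ⟨_, ⟨c, d, -, rfl⟩, h1⟩ := h1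
  obtain ⟨_, ⟨e, g, -, rfl⟩, h2⟩ := h2
  have d01 : a * d ≠ b * c := by
    have := distant_iff hu (f a) (f b) (f c) (f d)
    rw [← distant_ptAct_iff γ', h0, h1, distant_ptAct_iff, distant_iff hu] at this
    simpa [hf] using this
  have d02 : a * g ≠ b * e := by
    have := distant_iff hu (f a) (f b) (f e) (f g)
    rw [← distant_ptAct_iff γ', h0, h2, distant_ptAct_iff, distant_iff hu] at this
    simpa [hf] using this
  have d12 : c * g ≠ d * e := by
    have := distant_iff hu (f c) (f d) (f e) (f g)
    rw [← distant_ptAct_iff γ', h1, h2, distant_ptAct_iff, distant_iff hu] at this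
    simpa [hf] using this
  obtain ⟨δ, x, y, hx, hy, e1, e2, e3, e4, rfl, rfl⟩ :=
    exists_frame (π := RingHom.id K) (fun _ => isUnit_iff_ne_zero) d01 d02 d12
  obtain ⟨δ', hδ'⟩ : ∃ δ', δ' = Units.map f.mapMatrix.toMonoidHom δ := ⟨_, rfl⟩
  have hval : ∀ i j, δ'.val i j = f (δ.val i j) := fun i j => by rw [hδ']; rfl
  have s0 : ptAct R δ' (Submodule.span R {(1, 0)}) = Submodule.span R {(f a, f b)} := by
    rw [ptAct_span, hval, hval, hval, hval, e1, e2, ← span_unit_mul (hx.map f) (f a)]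
    simp
  have s1 : ptAct R δ' (Submodule.span R {(0, 1)}) = Submodule.span R {(f c, f d)} := by
    rw [ptAct_span, hval, hval, hval, hval, e3, e4, ← span_unit_mul (hy.map f) (f c)]
    simp
  have s2 : ptAct R δ' (Submodule.span R {(1, 1)}) =
      Submodule.span R {(f (x * a + y * c), f (x * b + y * d))} := by
    rw [ptAct_span, hval, hval, hval, hval, e1, e2, e3, e4]
    simp
  have fix : ∀ z ∈ StdChain K R f, ptAct R (δ' * γ' * γ⁻¹) z = z := by
    intro z hz
    refine ptAct_eq_self_of_fix hc _ ?_ ?_ ?_ hz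
    · rw [ptAct_mul, ptAct_mul, s0, h0, ptAct_inv_ptAct]
    · rw [ptAct_mul, ptAct_mul, s1, h1, ptAct_inv_ptAct]
    · rw [ptAct_mul, ptAct_mul, s2, h2, ptAct_inv_ptAct]
  have fix' : ∀ z ∈ StdChain K R f, ptAct R γ' (ptAct R δ' z) = ptAct R γ z := by
    intro z hz
    conv_rhs => rw [← fix z hz]
    rw [ptAct_mul, ptAct_mul, ptAct_ptAct_inv]
  conv_lhs => rw [← ptAct_map_image_stdChain δ, ← hδ', Set.image_image]
  exact Set.image_congr fix'

lemma frame_mem_stdChain :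
    Submodule.span R {((1 : R), (0 : R))} ∈ StdChain K R f ∧
    Submodule.span R {((0 : R), (1 : R))} ∈ StdChain K R f ∧
    Submodule.span R {((1 : R), (1 : R))} ∈ StdChain K R f :=
  ⟨⟨1, 0, (admissible_field_iff _ _).2 (by simp), by simp⟩,
    ⟨0, 1, (admissible_field_iff _ _).2 (by simp), by simp⟩,
    ⟨1, 1, (admissible_field_iff _ _).2 (by simp), by simp⟩⟩

lemma existsUnique_chain (hf : ∀ k, π (f k) = k) (hu : ∀ r, IsUnit r ↔ π r ≠ 0)
    (hc : ∀ k r, f k * r = r * f k) {p q r : Submodule R (R × R)}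
    (hpq : Distant R p q) (hpr : Distant R p r) (hqr : Distant R q r) :
    ∃! C : Set (Submodule R (R × R)), IsKChain K R f C ∧ p ∈ C ∧ q ∈ C ∧ r ∈ C := by
  obtain ⟨e, g, rfl⟩ : ∃ e g, r = Submodule.span R {(e, g)} :=
    let ⟨M, _, h⟩ := hpr; ⟨_, _, h⟩
  obtain ⟨a, b, c, d, rfl, rfl⟩ : ∃ a b c d, p = Submodule.span R {(a, b)} ∧
      q = Submodule.span R {(c, d)} :=
    let ⟨M, h, h'⟩ := hpq; ⟨_, _, _, _, h, h'⟩
  rw [distant_iff hu] at hpq hpr hqr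
  obtain ⟨γ, x, y, hx, hy, e1, e2, e3, e4, rfl, rfl⟩ := exists_frame hu hpq hpr hqr
  have s0 : Submodule.span R {(a, b)} = ptAct R γ (Submodule.span R {(1, 0)}) := by
    rw [ptAct_span, e1, e2, ← span_unit_mul hx a]
    simp
  have s1 : Submodule.span R {(c, d)} = ptAct R γ (Submodule.span R {(0, 1)}) := by
    rw [ptAct_span, e3, e4, ← span_unit_mul hy c]
    simp
  have s2 : Submodule.span R {(x * a + y * c, x * b + y * d)} =
      ptAct R γ (Submodule.span R {(1, 1)}) := by
    rw [ptAct_span, e1, e2, e3, e4]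
    simp
  rw [s0, s1, s2]
  obtain ⟨f0, f1, f2⟩ := frame_mem_stdChain (f := f)
  refine ⟨_, ⟨⟨γ, rfl⟩, Set.mem_image_of_mem _ f0, Set.mem_image_of_mem _ f1,
    Set.mem_image_of_mem _ f2⟩, ?_⟩
  rintro _ ⟨⟨γ', rfl⟩, h0, h1, h2⟩
  exact chain_unique hf hu hc γ γ' h0 h1 h2

lemma card_eq_card_mul_ker (hf : ∀ k, π (f k) = k) :
    Nat.card R = Nat.card K * Nat.card {r : R // π r = 0} := by
  rw [← Nat.card_prod]
  refine Nat.card_congr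
    { toFun := fun r => (π r, ⟨r - f (π r), by simp [hf]⟩)
      invFun := fun x => f x.1 + x.2.1
      left_inv := fun r => by simp
      right_inv := fun x => by
        ext <;> simp [hf, x.2.2] }

end Residue

/-! ### The divisible design -/

/-- The DD obtained from an `h`-dimensional Laguerre algebra `R` over `K = GF(q)`:
`P(R)` with the `K`-chains as blocks and the parallel classes as point classes is a
transversal `3`-`(q^{h-1}, q+1, 1)` divisible design with `q^h + q^{h-1}` points. -/
theorem stmt_19 (q h : ℕ) (hq : 2 ≤ q) (hh : 1 ≤ h)
    {K R : Type*} [Field K] [Fintype K] [Ring R] [Nontrivial R] [Algebra K R]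
    (hcardK : Fintype.card K = q)
    (hlocal : NonunitsIdeal R)
    (hdim : Module.finrank K R = h)
    (hLaguerre : (∀ r : R, ∃ k : K, ¬IsUnit (r - algebraMap K R k)) ∧
      (∀ k : K, ¬IsUnit (algebraMap K R k) → k = 0)) :
    Nat.card (ProjPoint R) = q ^ h + q ^ (h - 1) ∧
    (∀ p ∈ ProjPoint R,
      Nat.card {x : Submodule R (R × R) // x ∈ ProjPoint R ∧ ¬Distant R p x} = q ^ (h - 1)) ∧
    (∀ C : Set (Submodule R (R × R)),
      IsKChain K R (algebraMap K R) C → Nat.card C = q + 1) ∧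
    (∀ C : Set (Submodule R (R × R)), IsKChain K R (algebraMap K R) C →
      ∀ p ∈ ProjPoint R, ∃! x : Submodule R (R × R), x ∈ C ∧ ¬Distant R x p) ∧
    (∀ p q' r : Submodule R (R × R),
      Distant R p q' → Distant R p r → Distant R q' r →
        ∃! C : Set (Submodule R (R × R)),
          IsKChain K R (algebraMap K R) C ∧ p ∈ C ∧ q' ∈ C ∧ r ∈ C) := by
  obtain ⟨π, hf, hu⟩ := exists_residue hlocal hLaguerre.1
  have hc : ∀ (k : K) (r : R), algebraMap K R k * r = r * algebraMap K R k := Algebra.commutes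
  have : FiniteDimensional K R := Module.finite_of_finrank_pos (by omega)
  have : Finite R := Module.finite_of_finite K
  have hR : Nat.card R = q ^ h := by
    rw [Module.natCard_eq_pow_finrank (K := K), hdim, Nat.card_eq_fintype_card, hcardK]
  have hJ : Nat.card {r : R // π r = 0} = q ^ (h - 1) := by
    have h1 := card_eq_card_mul_ker hf
    rw [hR, Nat.card_eq_fintype_card (α := K), hcardK] at h1
    obtain ⟨n, rfl⟩ : ∃ n, h = n + 1 := ⟨h - 1, by omega⟩
    rw [pow_succ'] at h1
    exact (Nat.eq_of_mul_eq_mul_left (by omega) h1).symm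
  refine ⟨?_, ?_, ?_, ?_, ?_⟩
  · rw [card_projPoint hu, hR, hJ]
  · intro p hp
    rw [card_parallelClass hu hp, hJ]
  · rintro _ ⟨γ, rfl⟩
    rw [Nat.card_image_of_injective (ptAct_injective γ), card_stdChain,
      Nat.card_eq_fintype_card, hcardK]
  · rintro _ ⟨γ, rfl⟩ p hp
    obtain ⟨x, ⟨hx, hxd⟩, huniq⟩ :=
      stdChain_transversal hf hu (ptAct_mem_projPoint hp γ⁻¹)
    refine ⟨ptAct R γ x, ⟨Set.mem_image_of_mem _ hx, ?_⟩, ?_⟩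
    · rwa [← ptAct_ptAct_inv γ p, distant_ptAct_iff]
    · rintro _ ⟨⟨y, hy, rfl⟩, hyd⟩
      rw [← ptAct_ptAct_inv γ p, distant_ptAct_iff] at hyd
      rw [huniq y ⟨hy, hyd⟩]
  · intro p q' r hpq hpr hqr
    exact existsUnique_chain hf hu hc hpq hpr hqr
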